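/- There is a constant C, depending only on d and the fixed auxiliary functions, such that for all integers n ≥ 1, all unit vectors ν ∈ ℝ^d, all k ∈ ℤ, and every g ∈ L¹(ℝ^d), ‖Λ_k (I − 𝔖_{n,ν}) g‖_{L¹} ≤ C·‖g‖_{L¹}. -/

import Mathlib

/-!
The multiplier of `Λ_k (I - 𝔖_{n,ν})` is `β_k (1 - φ₀(r⟨ν, ξ/|ξ|⟩))` with `r = 2^{n/2} n^{-5}`, and
by Young's inequality (`young_L1`) it suffices to bound the `L¹` norm of its inverse Fourier
transform uniformly in `r > 0`, `ν`, `k`. If `r < 1/2` the multiplier vanishes identically.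

For `r ≥ 1/2` the pieces `β_k` and `β_k φ₀(r⟨ν, ξ/|ξ|⟩)` are treated separately. The `L¹` norm of an
inverse Fourier transform is unchanged by an invertible linear change of variables
(`lintegral_fourierInv_comp`). This removes the dilation by `2^k`, and replaces the second piece by
`β₀(A η) φ₀(⟨ν, η⟩ / |A η|)`, where `A = A_{s,ν}` multiplies the `ν`-component by
`s = 1/r ∈ [0, 2]`. This symbol (`symb`) is smooth jointly in `(s, ν, η)`, including at `s = 0`,
since `β₀` vanishes near the origin; and it is supported in `|η| ≤ 12/5`, since `φ₀` restricts
`|⟨ν, η⟩|` to be at most `|A η| ≤ 6/5`. As `(s, ν)` ranges over the compact set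
`[0, 2] × S^{d-1}`, all `η`-derivatives are bounded uniformly, so the inverse Fourier transforms
decay like `(1 + |x|)^{-d-1}` with a uniform constant (`fiber_fourierInv_bound`).
-/

open MeasureTheory Filter Metric
open scoped ENNReal FourierTransform RealInnerProductSpace Topology

noncomputable section

/-- Euclidean space `ℝ^d`. -/
abbrev Eu (d : ℕ) : Type := EuclideanSpace ℝ (Fin d)

/-- The parameter `γ = 1/2`. -/
def gam : ℝ := 1/2

/-- `ℓ(n) = ⌊2 log₂ n⌋ + 2`. -/
def elln (n : ℕ) : ℤ := ⌊2 * Real.logb 2 n⌋ + 2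

/-- `ℓ_ε(n) = ⌊2 ε⁻¹ log₂ n⌋ + 2`. -/
def ellEps (ε : ℝ) (n : ℕ) : ℤ := ⌊2 * ε⁻¹ * Real.logb 2 n⌋ + 2

/-- `n(ε) = 10^10 d ε⁻¹ log₂(2 ε⁻¹)`. -/
def nEps (d : ℕ) (ε : ℝ) : ℝ := 10 ^ 10 * d * ε⁻¹ * Real.logb 2 (2 * ε⁻¹)

variable {d : ℕ}

/-- `∫₀¹ a(sx + (1-s)y) ds`. -/
def avg01 (a : Eu d → ℝ) (x y : Eu d) : ℝ := ∫ s in (0:ℝ)..1, a (s • x + (1 - s) • y)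

/-- `∫ ϑ(s) a(sx + (1-s)y) ds`. -/
def avgTh (ϑ : ℝ → ℝ) (a : Eu d → ℝ) (x y : Eu d) : ℝ :=
  ∫ s : ℝ, ϑ s * a (s • x + (1 - s) • y)

/-- The dyadic piece `K_j(x) = (φ(2^{-j}x) - φ(2^{-j+1}x)) K(x)`. -/
def Kdyad (K φ : Eu d → ℝ) (j : ℤ) (x : Eu d) : ℝ :=
  (φ ((2:ℝ) ^ (-j) • x) - φ ((2:ℝ) ^ (-j+1) • x)) * K x

/-- `Φ_m(x) = 2^{-md} Φ(2^{-m} x)`. -/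
def PhiM (Φ : Eu d → ℝ) (m : ℤ) (x : Eu d) : ℝ :=
  (2:ℝ) ^ (-(m * (d:ℤ))) * Φ ((2:ℝ) ^ (-m) • x)

/-- `K_j^n = K_j * Φ_{j - ℓ_ε(n)}`. -/
def Kjn (K φ Φ : Eu d → ℝ) (ε : ℝ) (n : ℕ) (j : ℤ) (x : Eu d) : ℝ :=
  ∫ y, Kdyad K φ j (x - y) * PhiM Φ (j - ellEps ε n) y

/-- The operator `T_j` with kernel `K_j(x-y) ∫₀¹ a(sx+(1-s)y) ds`. -/
def TopJ (K φ a : Eu d → ℝ) (j : ℤ) (g : Eu d → ℂ) (x : Eu d) : ℂ :=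
  ∫ y, ((Kdyad K φ j (x - y) * avg01 a x y : ℝ) : ℂ) * g y

/-- The operator `T_j^n` with kernel `K_j^n(x-y) ∫ ϑ_n(s) a(sx+(1-s)y) ds`. -/
def Tnop (K φ Φ a : Eu d → ℝ) (ε : ℝ) (ϑn : ℝ → ℝ) (n : ℕ) (j : ℤ) (g : Eu d → ℂ)
    (x : Eu d) : ℂ :=
  ∫ y, ((Kjn K φ Φ ε n j (x - y) * avgTh ϑn a x y : ℝ) : ℂ) * g y

/-- The operator `T_j^{n,ν}` with kernel `K_j^{n,ν}(x-y) ∫ ϑ_n(s) a(sx+(1-s)y) ds`,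
where `K_j^{n,ν} = K_j^n ⋅ χ` (with `χ = χ_{n,ν}`). -/
def Tnnu (K φ Φ a : Eu d → ℝ) (χv : Eu d → ℝ) (ε : ℝ) (ϑn : ℝ → ℝ) (n : ℕ) (j : ℤ)
    (g : Eu d → ℂ) (x : Eu d) : ℂ :=
  ∫ y, ((Kjn K φ Φ ε n j (x - y) * χv (x - y) * avgTh ϑn a x y : ℝ) : ℂ) * g y

/-- `𝒦_{j,y}^{n,ν}[g](x) = K_j^{n,ν}(x-y) ∫ ϑ_n(s) g(sx+(1-s)y) ds` (with `χv = χ_{n,ν}`). -/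
def Kcal (K φ Φ : Eu d → ℝ) (χv : Eu d → ℝ) (ε : ℝ) (ϑn : ℝ → ℝ) (n : ℕ) (j : ℤ)
    (y : Eu d) (g : Eu d → ℂ) (x : Eu d) : ℂ :=
  ((Kjn K φ Φ ε n j (x - y) * χv (x - y) : ℝ) : ℂ) *
    ∫ s : ℝ, (ϑn s : ℂ) * g (s • x + (1 - s) • y)

/-- `P_m`, convolution with `Φ_m`. -/
def Pop (Φ : Eu d → ℝ) (m : ℤ) (g : Eu d → ℂ) (x : Eu d) : ℂ :=
  ∫ y, ((PhiM Φ m (x - y) : ℝ) : ℂ) * g y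

/-- The (closed) cube with center `c` and sidelength `2^l`. -/
def cube (c : Eu d) (l : ℤ) : Set (Eu d) := {y | ∀ k, |y k - c k| ≤ (2:ℝ) ^ (l - 1)}

/-- `B_m = Σ_{Q : L(Q) = m} b_Q`. -/
def Bfun {ι : Type} (Lq : ι → ℤ) (b : ι → Eu d → ℂ) (m : ℤ) (x : Eu d) : ℂ :=
  ∑' i : {i : ι // Lq i = m}, b i x

/-- The Fourier multiplier operator with multiplier `β_k(ξ) m(ξ)`,
`β_k(ξ) = φ(2^k ξ) - φ(2^{k+1} ξ)`, realized as convolution with the Schwartz kernel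
`𝓕⁻[β_k ⋅ m]`. -/
def LamM (φ : Eu d → ℝ) (mf : Eu d → ℝ) (k : ℤ) (g : Eu d → ℂ) (x : Eu d) : ℂ :=
  ∫ y, 𝓕⁻ (fun ξ : Eu d =>
      (((φ ((2:ℝ) ^ k • ξ) - φ ((2:ℝ) ^ (k+1) • ξ)) * mf ξ : ℝ) : ℂ)) (x - y) * g y

/-- The Littlewood–Paley operator `Λ_k`, Fourier multiplier `β_k`. -/
def Lam (φ : Eu d → ℝ) (k : ℤ) (g : Eu d → ℂ) (x : Eu d) : ℂ :=
  LamM φ (fun _ => 1) k g x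

/-- `V_k`, the Fourier multiplier operator with multiplier `φ(2^k ξ)`, realized as
convolution with `𝓕⁻[φ(2^k ⬝)]`. -/
def Vop (φ : Eu d → ℝ) (k : ℤ) (g : Eu d → ℂ) (x : Eu d) : ℂ :=
  ∫ y, 𝓕⁻ (fun ξ : Eu d => ((φ ((2:ℝ) ^ k • ξ) : ℝ) : ℂ)) (x - y) * g y

/-- The multiplier `ξ ↦ φ₀(r ⟨ν, ξ/|ξ|⟩)`. -/
def mDir (φ₀ : ℝ → ℝ) (r : ℝ) (ν : Eu d) (ξ : Eu d) : ℝ := φ₀ (r * ⟪ν, ‖ξ‖⁻¹ • ξ⟫)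

/-- The tube `τ_i^{n,ν}`. -/
def tubeT (ν : Eu d) (n : ℕ) (i : ℤ) : Set (Eu d) :=
  {x | |⟪x, ν⟫| ≤ (2:ℝ) ^ (i + 2) ∧ ‖x - ⟪x, ν⟫ • ν‖ ≤ (2:ℝ) ^ (((i:ℝ) + 2) - gam * n)}

/-- `H_i^{n,ν} = 2^{-id} 1_{τ_i^{n,ν}}`. -/
def Hfn (ν : Eu d) (n : ℕ) (i : ℤ) (x : Eu d) : ℝ :=
  Set.indicator (tubeT ν n i) (fun _ => (2:ℝ) ^ (-(i * (d:ℤ)))) x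

/-- Convolution of real functions. -/
def convR (f g : Eu d → ℝ) (x : Eu d) : ℝ := ∫ y, f (x - y) * g y

/-! ### Inverse Fourier transforms of smooth families -/

section Family

variable {P E : Type*} [NormedAddCommGroup P] [NormedSpace ℝ P]
  [NormedAddCommGroup E] [InnerProductSpace ℝ E] [FiniteDimensional ℝ E]

/-- The `η`-derivatives of a smooth function of `(p, η)` whose fibres over `K` vanish off a fixed
ball are bounded uniformly over `p ∈ K`, because they are restrictions of the joint derivatives
along the inclusion of the second factor. -/
lemma fiber_deriv_bound {K : Set P} (hK : IsCompact K) {G : P × E → ℂ}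
    (hG : ContDiff ℝ (⊤ : ℕ∞) G) {R : ℝ}
    (hR : ∀ p ∈ K, ∀ η : E, R < ‖η‖ → G (p, η) = 0) (n : ℕ) :
    ∃ M : ℝ, ∀ p ∈ K, ∀ η : E, ‖iteratedFDeriv ℝ n (fun η => G (p, η)) η‖ ≤ M := by
  have hcomp : IsCompact (K ×ˢ closedBall (0 : E) R) := hK.prod (isCompact_closedBall _ _)
  have hcont : Continuous (fun x => iteratedFDeriv ℝ n G x) :=
    hG.continuous_iteratedFDeriv (by exact_mod_cast le_top)
  obtain ⟨M, hM⟩ := hcomp.exists_bound_of_continuousOn hcont.continuousOn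
  set c := ∏ _i : Fin n, ‖ContinuousLinearMap.inr ℝ P E‖ with hc
  have hc0 : 0 ≤ c := by positivity
  refine ⟨max 0 (M * c), fun p hp η => ?_⟩
  by_cases hη : ‖η‖ ≤ R
  · refine le_trans ?_ (le_max_right _ _)
    have h1 : (fun η => G (p, η)) =
        (fun z => G (z + (p, 0))) ∘ (ContinuousLinearMap.inr ℝ P E) := by
      ext η; simp
    have h2 : ContDiff ℝ (⊤ : ℕ∞) (fun z => G (z + (p, (0 : E)))) := by fun_prop
    rw [h1, ContinuousLinearMap.iteratedFDeriv_comp_right _ h2 η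
      (by exact_mod_cast le_top), iteratedFDeriv_comp_add_right]
    refine (ContinuousMultilinearMap.norm_compContinuousLinearMap_le _ _).trans ?_
    refine mul_le_mul_of_nonneg_right ?_ hc0
    have := hM (p, η) ⟨hp, by simpa using hη⟩
    simpa using this
  · push Not at hη
    have h0 : (fun η => G (p, η)) =ᶠ[𝓝 η] fun _ => 0 := by
      filter_upwards [(isOpen_lt continuous_const continuous_norm).mem_nhds hη] with y hy
      exact hR p hp y hy
    rw [(h0.iteratedFDeriv ℝ n).eq_of_nhds]
    have : iteratedFDeriv ℝ n (fun _ : E => (0 : ℂ)) η = 0 := by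
      simpa using congrFun (iteratedFDeriv_zero_fun (𝕜 := ℝ) (E := E) (F := ℂ) (n := n)) η
    rw [this]; simp

variable [MeasurableSpace E] [BorelSpace E]

/-- A smooth family, over a compact parameter set, of functions supported in a fixed ball has
inverse Fourier transforms bounded in `L¹`. -/
lemma fiber_fourierInv_bound {K : Set P} (hK : IsCompact K) {G : P × E → ℂ}
    (hG : ContDiff ℝ (⊤ : ℕ∞) G) {R : ℝ}
    (hR : ∀ p ∈ K, ∀ η : E, R < ‖η‖ → G (p, η) = 0) :
    ∃ C : ℝ, ∀ p ∈ K, Integrable (fun η => G (p, η)) ∧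
      ∫⁻ x, ‖𝓕⁻ (fun η => G (p, η)) x‖ₑ ≤ ENNReal.ofReal C := by
  choose M hM using fiber_deriv_bound hK hG hR
  -- `B n` bounds `∫ ‖Dⁿ f‖`, `D n` bounds `‖w‖ⁿ ‖𝓕 f w‖`, and the exponent `N = dim E + 1` makes
  -- `(1 + ‖w‖)^(-N)` integrable.
  set B : ℕ → ℝ := fun n => M n * volume.real (closedBall (0 : E) R)
  set D : ℕ → ℝ := fun n => 2 ^ n * ∑ j ∈ Finset.range (n + 1), B j
  set N := Module.finrank ℝ E + 1 with hN
  set C' : ℝ := 2 ^ (N - 1) * (D 0 + D N) with hC'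
  refine ⟨∫ x : E, C' * (1 + ‖x‖) ^ (-(N : ℝ)), fun p hp => ?_⟩
  set f : E → ℂ := fun η => G (p, η) with hf
  have hfs : ContDiff ℝ (⊤ : ℕ∞) f := by rw [hf]; fun_prop
  have hsupp : HasCompactSupport f :=
    HasCompactSupport.intro (isCompact_closedBall (0 : E) R) fun x hx =>
      hR p hp x (by simpa using hx)
  have hcont : ∀ n, Continuous (iteratedFDeriv ℝ n f) := fun n =>
    hfs.continuous_iteratedFDeriv (by exact_mod_cast le_top)
  have hint : ∀ k n : ℕ, Integrable (fun v => ‖v‖ ^ k * ‖iteratedFDeriv ℝ n f v‖) := by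
    intro k n
    refine Continuous.integrable_of_hasCompactSupport ?_ ?_
    · have := hcont n
      fun_prop
    · exact ((hsupp.iteratedFDeriv n).norm).mul_left
  have hB : ∀ n, ∫ v, ‖iteratedFDeriv ℝ n f v‖ ≤ B n := by
    intro n
    have hz : ∀ v ∉ closedBall (0 : E) R, ‖iteratedFDeriv ℝ n f v‖ = 0 := by
      intro v hv
      rw [norm_eq_zero]
      by_contra h
      have hv' := support_iteratedFDeriv_subset (𝕜 := ℝ) n (Function.mem_support.mpr h)
      refine hv (closure_minimal ?_ isClosed_closedBall hv')
      intro x hx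
      by_contra hx'
      exact hx (hR p hp x (by simpa using hx'))
    rw [← setIntegral_eq_integral_of_forall_compl_eq_zero hz]
    have := norm_setIntegral_le_of_norm_le_const (μ := volume) (s := closedBall (0 : E) R)
      (f := fun v => ‖iteratedFDeriv ℝ n f v‖) (C := M n)
      (isCompact_closedBall (0 : E) R).measure_lt_top (fun v _ => by simpa using hM n p hp v)
    exact (le_abs_self _).trans this
  have hdecay : ∀ n w, ‖w‖ ^ n * ‖𝓕 f w‖ ≤ D n := by
    intro n w
    have := Real.pow_mul_norm_iteratedFDeriv_fourier_le (K := ⊤) (N := ⊤) hfs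
      (fun k n _ _ => hint k n) (k := 0) (n := n) le_top le_top w
    simp only [norm_iteratedFDeriv_zero] at this
    refine this.trans ?_
    simp only [D, pow_zero, one_mul, zero_add, Finset.range_one, Finset.singleton_product,
      Finset.sum_map, Function.Embedding.coeFn_mk, Nat.cast_zero, mul_zero]
    gcongr
    exact hB _
  have hmain : ∀ w, ‖𝓕⁻ f w‖ ≤ C' * (1 + ‖w‖) ^ (-(N : ℝ)) := by
    intro w
    rw [Real.fourierInv_eq_fourier_neg]
    have h0 := hdecay 0 (-w)
    have h1 := hdecay N (-w)
    rw [norm_neg] at h0 h1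
    have hw : 0 < 1 + ‖w‖ := by positivity
    rw [Real.rpow_neg hw.le, Real.rpow_natCast, ← div_eq_mul_inv, le_div_iff₀ (by positivity)]
    have h2 : (1 + ‖w‖) ^ N ≤ 2 ^ (N - 1) * (1 ^ N + ‖w‖ ^ N) :=
      add_pow_le zero_le_one (norm_nonneg _) N
    calc ‖𝓕 f (-w)‖ * (1 + ‖w‖) ^ N
        ≤ ‖𝓕 f (-w)‖ * (2 ^ (N - 1) * (1 ^ N + ‖w‖ ^ N)) := by gcongr
      _ = 2 ^ (N - 1) * (‖w‖ ^ 0 * ‖𝓕 f (-w)‖ + ‖w‖ ^ N * ‖𝓕 f (-w)‖) := by ring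
      _ ≤ C' := by rw [hC']; gcongr
  have hdom : Integrable (fun x : E => C' * (1 + ‖x‖) ^ (-(N : ℝ))) :=
    (integrable_one_add_norm (by rw [hN]; push_cast; linarith)).const_mul _
  refine ⟨hfs.continuous.integrable_of_hasCompactSupport hsupp, ?_⟩
  rw [ofReal_integral_eq_lintegral_ofReal hdom
    (ae_of_all _ fun w => (norm_nonneg _).trans (hmain w))]
  refine lintegral_mono fun w => ?_
  rw [← ofReal_norm]
  exact ENNReal.ofReal_le_ofReal (hmain w)

end Family

/-! ### Linear changes of variables and Young's inequality -/

section LinearChange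

variable {E : Type*} [NormedAddCommGroup E] [InnerProductSpace ℝ E] [FiniteDimensional ℝ E]
  [MeasurableSpace E] [BorelSpace E]

/-- Precomposition with an invertible symmetric linear map preserves the `L¹` norm of the inverse
Fourier transform, since `𝓕⁻(f ∘ A⁻¹)(x) = |det A| 𝓕⁻f(A x)`. -/
lemma lintegral_fourierInv_comp {A B : E →ₗ[ℝ] E} (hAB : A ∘ₗ B = LinearMap.id)
    (hsymm : ∀ x y, ⟪A x, y⟫ = ⟪x, A y⟫) {f : E → ℂ} (hf : Integrable f) :
    Integrable (fun ξ => f (B ξ)) ∧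
      ∫⁻ x, ‖𝓕⁻ (fun ξ => f (B ξ)) x‖ₑ = ∫⁻ x, ‖𝓕⁻ f x‖ₑ := by
  have hdet : LinearMap.det A * LinearMap.det B = 1 := by
    rw [← LinearMap.det_comp, hAB, LinearMap.det_id]
  have hA : LinearMap.det A ≠ 0 := left_ne_zero_of_mul_eq_one hdet
  have hB : LinearMap.det B ≠ 0 := right_ne_zero_of_mul_eq_one hdet
  have hAB' : ∀ x, A (B x) = x := fun x => LinearMap.congr_fun hAB x
  have hmapA := Measure.map_linearMap_addHaar_eq_smul_addHaar (volume : Measure E) hA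
  have hmapB := Measure.map_linearMap_addHaar_eq_smul_addHaar (volume : Measure E) hB
  have eA : MeasurableEmbedding A :=
    (LinearEquiv.ofIsUnitDet (v := Module.finBasis ℝ E) (v' := Module.finBasis ℝ E) (f := A)
      (by simpa using hA)).toContinuousLinearEquiv.toHomeomorph.measurableEmbedding
  have eB : MeasurableEmbedding B :=
    (LinearEquiv.ofIsUnitDet (v := Module.finBasis ℝ E) (v' := Module.finBasis ℝ E) (f := B)
      (by simpa using hB)).toContinuousLinearEquiv.toHomeomorph.measurableEmbedding
  have hBinv : (LinearMap.det B)⁻¹ = LinearMap.det A := (eq_inv_of_mul_eq_one_left hdet).symm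
  refine ⟨?_, ?_⟩
  · have : Integrable f (Measure.map B volume) := by
      rw [hmapB]
      exact hf.smul_measure ENNReal.ofReal_ne_top
    exact (eB.integrable_map_iff).1 this
  · have key : ∀ x, 𝓕⁻ (fun ξ => f (B ξ)) x = (|LinearMap.det A| : ℝ) • 𝓕⁻ f (A x) := by
      intro x
      have h1 : 𝓕⁻ (fun ξ => f (B ξ)) x =
          ∫ ξ, (fun η => Real.fourierChar ⟪η, A x⟫ • f η) (B ξ) := by
        rw [Real.fourierInv_eq]
        refine integral_congr_ae (ae_of_all _ fun ξ => ?_)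
        simp only [← hsymm, hAB']
      rw [h1, ← eB.integral_map (fun η => Real.fourierChar ⟪η, A x⟫ • f η), hmapB, integral_smul_measure, Real.fourierInv_eq, hBinv,
        ENNReal.toReal_ofReal (abs_nonneg _)]
    simp_rw [key, enorm_smul]
    rw [lintegral_const_mul' _ _ (by simp)]
    rw [← eA.lintegral_map (fun y => ‖𝓕⁻ f y‖ₑ), hmapA, lintegral_smul_measure, smul_eq_mul,
      ← mul_assoc, Real.enorm_eq_ofReal (abs_nonneg _), ← ENNReal.ofReal_mul (abs_nonneg _),
      ← abs_mul, mul_inv_cancel₀ hA]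
    simp

lemma continuous_fourierInv_of_integrable {f : E → ℂ} (hf : Integrable f) : Continuous (𝓕⁻ f) :=
  VectorFourier.fourierIntegral_continuous Real.continuous_fourierChar
    (by
      have : Continuous fun p : E × E => -⟪p.1, p.2⟫ := by fun_prop
      simpa using this) hf

lemma young_L1 {k : E → ℂ} (hk : Continuous k) {g : E → ℂ} (hg : Integrable g) :
    eLpNorm (fun x => ∫ y, k (x - y) * g y) 1 volume
      ≤ (∫⁻ x, ‖k x‖ₑ) * eLpNorm g 1 volume := by
  rw [eLpNorm_one_eq_lintegral_enorm, eLpNorm_one_eq_lintegral_enorm]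
  have hgm := hg.aestronglyMeasurable.enorm
  calc ∫⁻ x, ‖∫ y, k (x - y) * g y‖ₑ
      ≤ ∫⁻ x, ∫⁻ y, ‖k (x - y)‖ₑ * ‖g y‖ₑ := by
        refine lintegral_mono fun x => (enorm_integral_le_lintegral_enorm _).trans_eq ?_
        simp_rw [enorm_mul]
    _ = ∫⁻ y, ∫⁻ x, ‖k (x - y)‖ₑ * ‖g y‖ₑ := by
        refine lintegral_lintegral_swap ?_
        refine AEMeasurable.mul ?_ hgm.comp_snd
        have : Continuous fun p : E × E => k (p.1 - p.2) := by fun_prop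
        exact this.enorm.measurable.aemeasurable
    _ = ∫⁻ y, (∫⁻ x, ‖k x‖ₑ) * ‖g y‖ₑ := by
        refine lintegral_congr fun y => ?_
        rw [lintegral_mul_const'' _ (by
          have : Continuous fun x => k (x - y) := by fun_prop
          exact this.enorm.measurable.aemeasurable),
          lintegral_sub_right_eq_self (fun x => ‖k x‖ₑ) y]
    _ = _ := lintegral_const_mul'' _ hgm

end LinearChange

/-! ### The directional Littlewood–Paley symbol -/

section Symbol

/-- The linear map that multiplies the component along `ν` by `s` and fixes `ν^⊥`
(for a unit vector `ν`). -/
def stretch (s : ℝ) (ν : Eu d) : Eu d →ₗ[ℝ] Eu d :=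
  LinearMap.id + (s - 1) • ((innerSL ℝ ν).toLinearMap.smulRight ν)

lemma stretch_apply (s : ℝ) (ν η : Eu d) : stretch s ν η = η + ((s - 1) * ⟪ν, η⟫) • ν := by
  simp [stretch, smul_smul]

lemma inner_stretch (s : ℝ) {ν : Eu d} (hν : ‖ν‖ = 1) (η : Eu d) :
    ⟪ν, stretch s ν η⟫ = s * ⟪ν, η⟫ := by
  rw [stretch_apply, inner_add_right, real_inner_smul_right, real_inner_self_eq_norm_sq, hν]
  ring

lemma stretch_stretch {s r : ℝ} (hsr : s * r = 1) {ν : Eu d} (hν : ‖ν‖ = 1) (η : Eu d) :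
    stretch s ν (stretch r ν η) = η := by
  rw [stretch_apply, inner_stretch r hν, stretch_apply, add_assoc, ← add_smul]
  have : (r - 1) * ⟪ν, η⟫ + (s - 1) * (r * ⟪ν, η⟫) = (s * r - 1) * ⟪ν, η⟫ := by ring
  rw [this, hsr]; simp

lemma stretch_symm (s : ℝ) (ν x y : Eu d) : ⟪stretch s ν x, y⟫ = ⟪x, stretch s ν y⟫ := by
  simp only [stretch_apply, inner_add_left, inner_add_right, real_inner_smul_left,
    real_inner_smul_right, real_inner_comm ν x]
  ring

/-- The unscaled Littlewood–Paley symbol `β₀(ξ) = φ(ξ) - φ(2ξ)`. -/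
def bet (φ : Eu d → ℝ) (ξ : Eu d) : ℝ := φ ξ - φ ((2:ℝ) • ξ)

lemma bet_contDiff {φ : Eu d → ℝ} (hφ : ContDiff ℝ (⊤ : ℕ∞) φ) :
    ContDiff ℝ (⊤ : ℕ∞) (bet φ) := by
  unfold bet; fun_prop

lemma bet_small {φ : Eu d → ℝ} (hφ1 : ∀ x : Eu d, ‖x‖ ≤ 1 → φ x = 1) {ξ : Eu d}
    (h : ‖ξ‖ ≤ 1 / 2) : bet φ ξ = 0 := by
  rw [bet, hφ1 _ (by linarith), hφ1 _ (by rw [norm_smul]; norm_num; linarith), sub_self]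

lemma bet_large {φ : Eu d → ℝ} (hφ0 : ∀ x : Eu d, 6/5 ≤ ‖x‖ → φ x = 0) {ξ : Eu d}
    (h : 6 / 5 ≤ ‖ξ‖) : bet φ ξ = 0 := by
  rw [bet, hφ0 _ h, hφ0 _ (by rw [norm_smul]; norm_num; linarith), sub_self]

lemma bet_scale (φ : Eu d → ℝ) (k : ℤ) (ξ : Eu d) :
    bet φ ((2:ℝ) ^ k • ξ) = φ ((2:ℝ) ^ k • ξ) - φ ((2:ℝ) ^ (k+1) • ξ) := by
  rw [bet, smul_smul, zpow_add_one₀ (by norm_num), mul_comm]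

/-- The symbol `β₀(ξ) φ₀(r⟨ν, ξ/|ξ|⟩)` in the stretched coordinates `ξ = stretch s ν η`, `s = 1/r`.
It is smooth jointly in `(s, ν, η)`, also across `s = 0`. -/
def symb (φ : Eu d → ℝ) (φ₀ : ℝ → ℝ) (z : (ℝ × Eu d) × Eu d) : ℂ :=
  ((bet φ (stretch z.1.1 z.1.2 z.2) * φ₀ (⟪z.1.2, z.2⟫ * ‖stretch z.1.1 z.1.2 z.2‖⁻¹) : ℝ) : ℂ)

lemma symb_contDiff {φ : Eu d → ℝ} (hφ : ContDiff ℝ (⊤ : ℕ∞) φ)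
    (hφ1 : ∀ x : Eu d, ‖x‖ ≤ 1 → φ x = 1) {φ₀ : ℝ → ℝ} (hφ₀ : ContDiff ℝ (⊤ : ℕ∞) φ₀) :
    ContDiff ℝ (⊤ : ℕ∞) (symb φ φ₀) := by
  have hs : ContDiff ℝ (⊤ : ℕ∞)
      (fun z : (ℝ × Eu d) × Eu d => stretch z.1.1 z.1.2 z.2) := by
    have hi : ContDiff ℝ (⊤ : ℕ∞) (fun z : (ℝ × Eu d) × Eu d => ⟪z.1.2, z.2⟫) :=
      ContDiff.inner ℝ (by fun_prop) (by fun_prop)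
    simp only [stretch_apply]; fun_prop
  rw [contDiff_iff_contDiffAt]
  intro z
  by_cases hz : stretch z.1.1 z.1.2 z.2 = 0
  · have : symb φ φ₀ =ᶠ[𝓝 z] fun _ => 0 := by
      have h0 : {w : (ℝ × Eu d) × Eu d | ‖stretch w.1.1 w.1.2 w.2‖ < 1 / 2} ∈ 𝓝 z :=
        (isOpen_lt hs.continuous.norm continuous_const).mem_nhds (by simp [hz])
      filter_upwards [h0] with w hw
      have hw' : ‖stretch w.1.1 w.1.2 w.2‖ < 1 / 2 := hw
      simp [symb, bet_small hφ1 hw'.le]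
    exact contDiffAt_const.congr_of_eventuallyEq this
  · unfold symb
    have h1 := (bet_contDiff hφ).comp hs
    have h2 : ContDiffAt ℝ (⊤ : ℕ∞)
        (fun z : (ℝ × Eu d) × Eu d => ‖stretch z.1.1 z.1.2 z.2‖⁻¹) z :=
      (hs.contDiffAt.norm ℝ hz).inv (norm_ne_zero_iff.mpr hz)
    have h3 : ContDiffAt ℝ (⊤ : ℕ∞)
        (fun z : (ℝ × Eu d) × Eu d => ⟪z.1.2, z.2⟫ * ‖stretch z.1.1 z.1.2 z.2‖⁻¹) z :=
      (ContDiffAt.inner ℝ (by fun_prop) (by fun_prop)).mul h2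
    exact Complex.ofRealCLM.contDiff.contDiffAt.comp z
      (h1.contDiffAt.mul (hφ₀.contDiffAt.comp z h3))

lemma symb_support {φ : Eu d → ℝ} (hφ0 : ∀ x : Eu d, 6/5 ≤ ‖x‖ → φ x = 0) {φ₀ : ℝ → ℝ}
    (hφ₀0 : ∀ u : ℝ, 1 ≤ |u| → φ₀ u = 0) (hφ1 : ∀ x : Eu d, ‖x‖ ≤ 1 → φ x = 1)
    {s : ℝ} (hs : s ∈ Set.Icc (0:ℝ) 2) {ν : Eu d} (hν : ‖ν‖ = 1) {η : Eu d}
    (hη : 12 / 5 < ‖η‖) : symb φ φ₀ ((s, ν), η) = 0 := by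
  by_contra h
  simp only [symb, Complex.ofReal_eq_zero, mul_eq_zero, not_or] at h
  obtain ⟨h1, h2⟩ := h
  set ξ := stretch s ν η with hξ
  have hξ1 : ‖ξ‖ < 6 / 5 := by
    by_contra h'; exact h1 (bet_large hφ0 (not_lt.mp h'))
  have hξ2 : 0 < ‖ξ‖ := by
    by_contra h'; exact h1 (bet_small hφ1 (by linarith))
  have h3 : |⟪ν, η⟫| < ‖ξ‖ := by
    by_contra h'
    refine h2 (hφ₀0 _ ?_)
    rw [abs_mul, abs_inv, abs_norm, ← div_eq_mul_inv, one_le_div hξ2]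
    exact not_lt.mp h'
  have h4 : η = ξ - ((s - 1) * ⟪ν, η⟫) • ν := by rw [hξ, stretch_apply]; simp
  have h5 : |s - 1| ≤ 1 := abs_le.mpr ⟨by linarith [hs.1], by linarith [hs.2]⟩
  have h6 : ‖η‖ ≤ ‖ξ‖ + |s - 1| * |⟪ν, η⟫| := by
    calc ‖η‖ = ‖ξ - ((s - 1) * ⟪ν, η⟫) • ν‖ := by rw [← h4]
      _ ≤ ‖ξ‖ + ‖((s - 1) * ⟪ν, η⟫) • ν‖ := norm_sub_le _ _
      _ = _ := by rw [norm_smul, hν, mul_one, Real.norm_eq_abs, abs_mul]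
  have h7 : |s - 1| * |⟪ν, η⟫| ≤ 1 * |⟪ν, η⟫| := by gcongr
  linarith

/-- The kernels of the Littlewood–Paley operators `Λ_k` are bounded in `L¹` uniformly in `k`. -/
lemma bet_kernel_bound {φ : Eu d → ℝ} (hφ : ContDiff ℝ (⊤ : ℕ∞) φ)
    (hφ0 : ∀ x : Eu d, 6/5 ≤ ‖x‖ → φ x = 0) :
    ∃ C : ℝ, ∀ k : ℤ,
      Integrable (fun ξ : Eu d => ((bet φ ((2:ℝ) ^ k • ξ) : ℝ) : ℂ)) ∧
      ∫⁻ x, ‖𝓕⁻ (fun ξ : Eu d => ((bet φ ((2:ℝ) ^ k • ξ) : ℝ) : ℂ)) x‖ₑ ≤ ENNReal.ofReal C := by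
  have hG : ContDiff ℝ (⊤ : ℕ∞) (fun z : ℝ × Eu d => ((bet φ z.2 : ℝ) : ℂ)) :=
    Complex.ofRealCLM.contDiff.comp ((bet_contDiff hφ).comp contDiff_snd)
  obtain ⟨C, hC⟩ := fiber_fourierInv_bound (K := {0}) isCompact_singleton hG (R := 6 / 5)
    (fun p _ η hη => by simp [bet_large hφ0 hη.le])
  obtain ⟨h1, h2⟩ := hC 0 rfl
  refine ⟨C, fun k => ?_⟩
  have h2k : (2:ℝ) ^ k ≠ 0 := by positivity
  obtain ⟨h3, h4⟩ := lintegral_fourierInv_comp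
    (A := ((2:ℝ) ^ k)⁻¹ • LinearMap.id) (B := (2:ℝ) ^ k • LinearMap.id)
    (by ext1 x; simp [smul_smul, h2k])
    (fun x y => by simp [real_inner_smul_left, real_inner_smul_right]) h1
  exact ⟨h3, h4.trans_le h2⟩

/-- The kernel of `Λ_k 𝔖`, with directional aperture parameter `r ≥ 1/2`, is bounded in `L¹`
uniformly in `r`, `ν` and `k`. -/
lemma dir_kernel_bound {φ : Eu d → ℝ} (hφ : ContDiff ℝ (⊤ : ℕ∞) φ)
    (hφ1 : ∀ x : Eu d, ‖x‖ ≤ 1 → φ x = 1)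
    (hφ0 : ∀ x : Eu d, 6/5 ≤ ‖x‖ → φ x = 0)
    {φ₀ : ℝ → ℝ} (hφ₀ : ContDiff ℝ (⊤ : ℕ∞) φ₀) (hφ₀0 : ∀ u : ℝ, 1 ≤ |u| → φ₀ u = 0) :
    ∃ C : ℝ, ∀ r : ℝ, 1 / 2 ≤ r → ∀ ν : Eu d, ‖ν‖ = 1 → ∀ k : ℤ,
      Integrable (fun ξ : Eu d => ((bet φ ((2:ℝ) ^ k • ξ) * mDir φ₀ r ν ξ : ℝ) : ℂ)) ∧
      ∫⁻ x, ‖𝓕⁻ (fun ξ : Eu d => ((bet φ ((2:ℝ) ^ k • ξ) * mDir φ₀ r ν ξ : ℝ) : ℂ)) x‖ₑ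
        ≤ ENNReal.ofReal C := by
  obtain ⟨C, hC⟩ := fiber_fourierInv_bound
    (K := Set.Icc (0:ℝ) 2 ×ˢ sphere (0 : Eu d) 1) (isCompact_Icc.prod (isCompact_sphere _ _))
    (symb_contDiff hφ hφ1 hφ₀) (R := 12 / 5)
    (fun p hp η hη => symb_support hφ0 hφ₀0 hφ1 hp.1 (by simpa using hp.2) hη)
  refine ⟨C, fun r hr ν hν k => ?_⟩
  have hr0 : 0 < r := by linarith
  have hsr : r⁻¹ * r = 1 := inv_mul_cancel₀ hr0.ne'
  have hs : r⁻¹ ∈ Set.Icc (0:ℝ) 2 :=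
    ⟨by positivity, by rw [inv_le_comm₀ hr0 two_pos]; linarith⟩
  obtain ⟨h1, h2⟩ := hC (r⁻¹, ν) ⟨hs, by simpa using hν⟩
  have h2k : (0:ℝ) < (2:ℝ) ^ k := by positivity
  obtain ⟨h3, h4⟩ := lintegral_fourierInv_comp
    (A := ((2:ℝ) ^ k)⁻¹ • stretch r⁻¹ ν) (B := (2:ℝ) ^ k • stretch r ν)
    (by
      ext1 x
      simp [smul_smul, h2k.ne', stretch_stretch hsr hν])
    (fun x y => by
      simp [real_inner_smul_left, real_inner_smul_right, stretch_symm]) h1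
  have heq : (fun ξ : Eu d => symb φ φ₀ ((r⁻¹, ν), ((2:ℝ) ^ k • stretch r ν) ξ)) =
      fun ξ : Eu d => ((bet φ ((2:ℝ) ^ k • ξ) * mDir φ₀ r ν ξ : ℝ) : ℂ) := by
    ext ξ
    have e1 : stretch r⁻¹ ν (((2:ℝ) ^ k • stretch r ν) ξ) = (2:ℝ) ^ k • ξ := by
      simp [stretch_stretch hsr hν]
    have e2 : ⟪ν, ((2:ℝ) ^ k • stretch r ν) ξ⟫ * ‖(2:ℝ) ^ k • ξ‖⁻¹ = r * ⟪ν, ‖ξ‖⁻¹ • ξ⟫ := by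
      rw [LinearMap.smul_apply, real_inner_smul_right, inner_stretch r hν, norm_smul,
        Real.norm_of_nonneg h2k.le, real_inner_smul_right, mul_inv]
      field_simp
    simp only [symb, e1, e2, mDir]
  rw [heq] at h3 h4
  exact ⟨h3, h4.trans_le h2⟩

end Symbol

theorem stmt (d : ℕ) (hd : 2 ≤ d)
    (φ : Eu d → ℝ) (hφsm : ContDiff ℝ (⊤ : ℕ∞) φ)
    (hφrad : ∀ x y : Eu d, ‖x‖ = ‖y‖ → φ x = φ y)
    (hφ1 : ∀ x : Eu d, ‖x‖ ≤ 1 → φ x = 1)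
    (hφ0 : ∀ x : Eu d, 6/5 ≤ ‖x‖ → φ x = 0)
    (φ₀ : ℝ → ℝ) (hφ₀sm : ContDiff ℝ (⊤ : ℕ∞) φ₀)
    (hφ₀1 : ∀ u : ℝ, |u| < 1/2 → φ₀ u = 1)
    (hφ₀0 : ∀ u : ℝ, 1 ≤ |u| → φ₀ u = 0)
    :
    ∃ C : ℝ, 0 < C ∧ ∀ n : ℕ, 1 ≤ n → ∀ ν : Eu d, ‖ν‖ = 1 → ∀ k : ℤ,
      ∀ g : Eu d → ℂ, Integrable g →
      eLpNorm (LamM φ (fun ξ =>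
          1 - mDir φ₀ ((2:ℝ)^((n:ℝ)*gam) * (n:ℝ)^(-5 : ℤ)) ν ξ) k g) 1 volume
        ≤ ENNReal.ofReal C * eLpNorm g 1 volume := by
  obtain ⟨C₁, hC₁⟩ := bet_kernel_bound hφsm hφ0
  obtain ⟨C₂, hC₂⟩ := dir_kernel_bound hφsm hφ1 hφ0 hφ₀sm hφ₀0
  refine ⟨|C₁| + |C₂| + 1, by positivity, fun n _ ν hν k g hg => ?_⟩
  set r : ℝ := (2:ℝ)^((n:ℝ)*gam) * (n:ℝ)^(-5 : ℤ) with hr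
  have hr0 : 0 ≤ r := by positivity
  rcases lt_or_ge r (1 / 2) with hr2 | hr2
  · -- For `r < 1/2` the argument of `φ₀` stays in the region `φ₀ = 1`: the multiplier is zero.
    have hm : ∀ ξ, mDir φ₀ r ν ξ = 1 := by
      intro ξ
      refine hφ₀1 _ ?_
      have hn : ‖‖ξ‖⁻¹ • ξ‖ ≤ 1 := by
        rw [norm_smul, norm_inv, norm_norm]
        exact inv_mul_le_one
      have hi : |⟪ν, ‖ξ‖⁻¹ • ξ⟫| ≤ 1 := by
        refine (abs_real_inner_le_norm _ _).trans ?_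
        rw [hν, one_mul]; exact hn
      rw [abs_mul, abs_of_nonneg hr0]
      nlinarith
    have hz : LamM φ (fun ξ => 1 - mDir φ₀ r ν ξ) k g = fun _ => 0 := by
      ext x
      simp [LamM, hm, Real.fourierInv_eq]
    rw [hz]
    simp
  · obtain ⟨i1, b1⟩ := hC₁ k
    obtain ⟨i2, b2⟩ := hC₂ r hr2 ν hν k
    set f₁ : Eu d → ℂ := fun ξ => ((bet φ ((2:ℝ) ^ k • ξ) : ℝ) : ℂ) with hf₁
    set f₂ : Eu d → ℂ := fun ξ => ((bet φ ((2:ℝ) ^ k • ξ) * mDir φ₀ r ν ξ : ℝ) : ℂ) with hf₂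
    have hker : LamM φ (fun ξ => 1 - mDir φ₀ r ν ξ) k g =
        fun x => ∫ y, 𝓕⁻ (fun ξ => f₁ ξ - f₂ ξ) (x - y) * g y := by
      ext x
      have : (fun ξ : Eu d => (((φ ((2:ℝ) ^ k • ξ) - φ ((2:ℝ) ^ (k+1) • ξ)) *
          (1 - mDir φ₀ r ν ξ) : ℝ) : ℂ)) = fun ξ => f₁ ξ - f₂ ξ := by
        ext ξ
        simp only [hf₁, hf₂, bet_scale]
        push_cast; ring
      simp only [LamM, this]
    have hsub : ∀ x, 𝓕⁻ (fun ξ => f₁ ξ - f₂ ξ) x = 𝓕⁻ f₁ x - 𝓕⁻ f₂ x := by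
      intro x
      simp only [Real.fourierInv_eq, smul_sub]
      have hch : Continuous fun ξ : Eu d => Real.fourierChar ⟪ξ, x⟫ :=
        Real.continuous_fourierChar.comp (by fun_prop)
      have hi : ∀ f : Eu d → ℂ, Integrable f →
          Integrable (fun ξ => Real.fourierChar ⟪ξ, x⟫ • f ξ) := fun f hf =>
        (integrable_norm_iff (hch.aestronglyMeasurable.smul hf.aestronglyMeasurable)).1
          (by simpa using hf.norm)
      exact integral_sub (hi _ i1) (hi _ i2)
    rw [hker]
    refine (young_L1 (continuous_fourierInv_of_integrable (i1.sub i2)) hg).trans ?_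
    gcongr
    have hc := (continuous_fourierInv_of_integrable i1).enorm.measurable
    calc ∫⁻ x, ‖𝓕⁻ (f₁ - f₂) x‖ₑ ≤ ∫⁻ x, (‖𝓕⁻ f₁ x‖ₑ + ‖𝓕⁻ f₂ x‖ₑ) := by
          refine lintegral_mono fun x => ?_
          have := hsub x
          change ‖𝓕⁻ (fun ξ => f₁ ξ - f₂ ξ) x‖ₑ ≤ _
          rw [this]
          exact enorm_sub_le
      _ = (∫⁻ x, ‖𝓕⁻ f₁ x‖ₑ) + ∫⁻ x, ‖𝓕⁻ f₂ x‖ₑ := lintegral_add_left hc _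
      _ ≤ ENNReal.ofReal C₁ + ENNReal.ofReal C₂ := add_le_add b1 b2
      _ ≤ ENNReal.ofReal |C₁| + ENNReal.ofReal |C₂| := by
          gcongr <;> exact le_abs_self _
      _ = ENNReal.ofReal (|C₁| + |C₂|) := (ENNReal.ofReal_add (abs_nonneg _) (abs_nonneg _)).symm
      _ ≤ ENNReal.ofReal (|C₁| + |C₂| + 1) := ENNReal.ofReal_le_ofReal (by linarith)
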